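/- The limit as x tends to 0 of (sin(tan x) − tan(sin x)) / (arcsin(arctan x) − arctan(arcsin x)) equals 1. -/

import Mathlib

/-!
Put `f = sin ∘ tan`, `g = tan ∘ sin` and `h = f - g`, so that the numerator is `h x`. Near `0` the
functions `arcsin ∘ arctan` and `arctan ∘ arcsin` are right inverses of `g` and `f`; write
`a = arcsin (arctan x)` and `b = arctan (arcsin x)`, so that `g a = x = f b`. Then
`h b = f b - g b = g a - g b`, and strict differentiability of `g` at `0` with derivative `1` gives
`h b ~ a - b`. Since `h` is analytic at `0` and `b ~ x`, also `h x ~ h b`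
(`AnalyticAt.isEquivalent_comp`): either `h` vanishes near `0`, or `h y = y ^ n * k y` with
`k 0 ≠ 0`. Hence `h x ~ a - b`, and the value of the leading coefficient of `h` is never needed.
-/

open Filter Topology Asymptotics

/-- Analytic functions preserve asymptotic equivalence of infinitesimals. This includes the
function vanishing near `0`, as two eventually zero functions are equivalent. -/
lemma AnalyticAt.isEquivalent_comp {α : Type*} {l : Filter α} {h : ℝ → ℝ} (hh : AnalyticAt ℝ h 0)
    {u v : α → ℝ} (huv : u ~[l] v) (hu : Tendsto u l (𝓝 0)) (hv : Tendsto v l (𝓝 0)) :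
    (fun x => h (u x)) ~[l] (fun x => h (v x)) := by
  by_cases h0 : ∀ᶠ z in 𝓝 0, h z = 0
  · apply EventuallyEq.isEquivalent
    filter_upwards [hu.eventually h0, hv.eventually h0] with x h1 h2
    rw [h1, h2]
  · obtain ⟨n, k, hk, hk0, hhk⟩ := hh.exists_eventuallyEq_pow_smul_nonzero_iff.mpr h0
    have hku : (fun x => k (u x)) ~[l] fun _ => k 0 :=
      (isEquivalent_const_iff_tendsto hk0).mpr (hk.continuousAt.tendsto.comp hu)
    have hkv : (fun x => k (v x)) ~[l] fun _ => k 0 :=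
      (isEquivalent_const_iff_tendsto hk0).mpr (hk.continuousAt.tendsto.comp hv)
    refine (((huv.pow n).mul (hku.trans hkv.symm)).congr_left ?_).congr_right ?_
    · filter_upwards [hu.eventually hhk] with x hx
      simp [hx]
    · filter_upwards [hv.eventually hhk] with x hx
      simp [hx]

lemma Real.hasStrictDerivAt_tan_sin_zero :
    HasStrictDerivAt (fun x => Real.tan (Real.sin x)) 1 0 := by
  have h1 : HasStrictDerivAt Real.tan (1 / Real.cos (Real.sin 0) ^ 2) (Real.sin 0) :=
    Real.hasStrictDerivAt_tan (by simp)
  simpa [Function.comp_def] using h1.comp 0 (Real.hasStrictDerivAt_sin 0)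

lemma Real.hasDerivAt_arctan_arcsin_zero :
    HasDerivAt (fun x => Real.arctan (Real.arcsin x)) 1 0 := by
  have h1 : HasDerivAt Real.arcsin (1 / √(1 - 0 ^ 2)) 0 :=
    Real.hasDerivAt_arcsin (by norm_num) (by norm_num)
  simpa [Function.comp_def] using (Real.hasDerivAt_arctan (Real.arcsin 0)).comp 0 h1

lemma Real.analyticAt_tan_zero : AnalyticAt ℝ Real.tan 0 := by
  have h : AnalyticAt ℝ (fun x => Real.sin x / Real.cos x) 0 :=
    Real.analyticAt_sin.fun_div Real.analyticAt_cos (by simp)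
  simpa only [← Real.tan_eq_sin_div_cos] using h

lemma Real.analyticAt_sin_tan_sub_tan_sin :
    AnalyticAt ℝ (fun x => Real.sin (Real.tan x) - Real.tan (Real.sin x)) 0 := by
  have h1 : AnalyticAt ℝ (fun x => Real.sin (Real.tan x)) 0 :=
    Real.analyticAt_sin.fun_comp Real.analyticAt_tan_zero
  have h2 : AnalyticAt ℝ (fun x => Real.tan (Real.sin x)) 0 :=
    AnalyticAt.fun_comp (by simpa using Real.analyticAt_tan_zero) Real.analyticAt_sin
  exact h1.fun_sub h2

/-- Problem 2 of Arnold's mathematical trivium: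
the limit as `x → 0` (within a punctured neighborhood of `0` where the
denominator is nonzero) of
`(sin (tan x) - tan (sin x)) / (arcsin (arctan x) - arctan (arcsin x))`
equals `1`. -/
theorem arnold_trivium_problem2 :
    Filter.Tendsto
      (fun x : ℝ =>
        (Real.sin (Real.tan x) - Real.tan (Real.sin x)) /
          (Real.arcsin (Real.arctan x) - Real.arctan (Real.arcsin x)))
      (nhdsWithin 0
        {x : ℝ | x ≠ 0 ∧ Real.arcsin (Real.arctan x) - Real.arctan (Real.arcsin x) ≠ 0})
      (nhds 1) := by
  have ha : Tendsto (fun x => Real.arcsin (Real.arctan x)) (𝓝 0) (𝓝 0) := by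
    have h : Continuous (fun x => Real.arcsin (Real.arctan x)) :=
      Real.continuous_arcsin.comp Real.continuous_arctan
    simpa using h.tendsto 0
  have hb : Tendsto (fun x => Real.arctan (Real.arcsin x)) (𝓝 0) (𝓝 0) := by
    have h : Continuous (fun x => Real.arctan (Real.arcsin x)) :=
      Real.continuous_arctan.comp Real.continuous_arcsin
    simpa using h.tendsto 0
  have hbx : (fun x => Real.arctan (Real.arcsin x)) ~[𝓝 0] fun x => x := by
    have h := Real.hasDerivAt_arctan_arcsin_zero.isLittleO
    simpa [IsEquivalent, Pi.sub_def] using h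
  have h_num := Real.analyticAt_sin_tan_sub_tan_sin.isEquivalent_comp hbx.symm tendsto_id hb
  have h_strict : (fun x => Real.tan (Real.sin (Real.arcsin (Real.arctan x)))
        - Real.tan (Real.sin (Real.arctan (Real.arcsin x)))) ~[𝓝 0]
      fun x => Real.arcsin (Real.arctan x) - Real.arctan (Real.arcsin x) := by
    have h := Real.hasStrictDerivAt_tan_sin_zero.hasStrictFDerivAt.isLittleO.comp_tendsto
      (ha.prodMk_nhds hb)
    simpa [IsEquivalent, Pi.sub_def, Function.comp_def] using h
  -- `arcsin` inverts `sin` only on `[-1, 1]`, which contains `x` and `arctan x` for `x` near `0`.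
  have hx : ∀ᶠ x : ℝ in 𝓝 0, x ∈ Set.Icc (-1) 1 :=
    Icc_mem_nhds (by norm_num) (by norm_num)
  have h_arctan : ∀ᶠ x : ℝ in 𝓝 0, Real.arctan x ∈ Set.Icc (-1) 1 := by
    have h : Tendsto Real.arctan (𝓝 0) (𝓝 0) := by
      simpa using Real.continuous_arctan.tendsto 0
    exact h.eventually hx
  have h_den : (fun x => Real.sin (Real.tan x) - Real.tan (Real.sin x)) ~[𝓝 0]
      fun x => Real.arcsin (Real.arctan x) - Real.arctan (Real.arcsin x) := by
    refine h_num.trans (h_strict.congr_left ?_)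
    filter_upwards [hx, h_arctan] with x h1 h2
    rw [Real.sin_arcsin' h2, Real.tan_arctan, Real.tan_arctan, Real.sin_arcsin' h1]
  refine (isEquivalent_iff_tendsto_one ?_).mp (h_den.mono nhdsWithin_le_nhds)
  filter_upwards [self_mem_nhdsWithin] with x hx using hx.2
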